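/- Let q be a prime, let a be an integer with 0 < a < q, let s ∈ ℂ, and let x > 0 be real. Then ∑_{n=1}^∞ F(x/n)·cos(2πna/q)·n^s = q^s · ∑′_{1 ≤ n ≤ x/q} σ_s(n) + q^s ∑_{d ∣ q, d > 1} (1/(d^s·φ(d))) ∑_{χ mod d, χ even} χ(a)·τ(conj(χ)) · ∑′_{1 ≤ n ≤ dx/q} σ_s(χ, n), where the outer sum runs over the divisors d > 1 of q, the middle sum runs over the even Dirichlet characters χ modulo d (including the principal character), conj(χ) denotes the complex conjugate character, and σ_s(n) := ∑_{ℓ∣n} ℓ^s is the ordinary generalized divisor sum. (The left-hand side is a finite sum since F(x/n) = 0 for n > x.) -/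

import Mathlib

open Complex Finset
open scoped Real BigOperators Classical

/-- `F(x) = ⌊x⌋` for non-integral `x`, and `F(x) = x - 1/2` for integral `x`. -/
noncomputable def Ffn (x : ℝ) : ℝ := if ∃ m : ℤ, x = (m : ℝ) then x - 1 / 2 else (⌊x⌋ : ℝ)

/-- Generalized divisor sum `σ_s(n) = ∑_{ℓ ∣ n} ℓ^s`. -/
noncomputable def csigma (s : ℂ) (n : ℕ) : ℂ := ∑ ℓ ∈ n.divisors, (ℓ : ℂ) ^ s

/-- Twisted divisor sum `σ_s(χ, n) = ∑_{ℓ ∣ n} χ(ℓ) ℓ^s`. -/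
noncomputable def sigmaChi {d : ℕ} (χ : DirichletCharacter ℂ d) (s : ℂ) (n : ℕ) : ℂ :=
  ∑ ℓ ∈ n.divisors, χ (ℓ : ZMod d) * (ℓ : ℂ) ^ s

/-- The Gauss sum `τ(conj χ) = ∑_{r mod d} conj(χ(r)) e^{2πir/d}` (zero for modulus `0`). -/
noncomputable def tauConj : (d : ℕ) → DirichletCharacter ℂ d → ℂ
  | 0, _ => 0
  | (m + 1), χ => ∑ r : ZMod (m + 1),
      (starRingEnd ℂ) (χ r) * Complex.exp (2 * (π : ℂ) * Complex.I * (r.val : ℂ) / ((m : ℂ) + 1))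

/-- The primed sum `∑′_{1 ≤ n ≤ y} f(n)`: the term at an integral endpoint is halved. -/
noncomputable def psum (y : ℝ) (f : ℕ → ℂ) : ℂ :=
  (∑ n ∈ Finset.Icc 1 ⌊y⌋₊, f n) -
    (if y = (⌊y⌋₊ : ℝ) ∧ 1 ≤ ⌊y⌋₊ then f ⌊y⌋₊ / 2 else 0)

lemma ffn_eq (y : ℝ) (hy : 0 < y) (l : ℕ) (hl : 1 ≤ l) :
    Ffn (y / l) = ((⌊y⌋₊ / l : ℕ) : ℝ) -
      (if y = (⌊y⌋₊ : ℝ) ∧ l ∣ ⌊y⌋₊ then 1 / 2 else 0) := by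
  have hl0 : (0 : ℝ) < l := by exact_mod_cast hl
  have hfl : ⌊y / l⌋₊ = ⌊y⌋₊ / l := Nat.floor_div_natCast y l
  have hyl : 0 < y / l := by positivity
  unfold Ffn
  by_cases h : ∃ m : ℤ, y / l = m
  · rw [if_pos h]
    obtain ⟨m, hm⟩ := h
    have hm0 : 0 < m := by rw [hm] at hyl; exact_mod_cast hyl
    lift m to ℕ using hm0.le
    have hy2 : y = ((m * l : ℕ) : ℝ) := by
      rw [div_eq_iff hl0.ne'] at hm
      push_cast; exact_mod_cast hm
    have hN : ⌊y⌋₊ = m * l := by rw [hy2]; exact Nat.floor_natCast _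
    rw [if_pos ⟨by rw [hN]; exact hy2, by rw [hN]; exact Dvd.intro_left m rfl⟩, hN,
      Nat.mul_div_cancel _ (by omega), hm]
    simp
  · rw [if_neg h, if_neg, ← hfl, sub_zero, ← natCast_floor_eq_intCast_floor hyl.le]
    rintro ⟨h1, k, hk⟩
    apply h
    refine ⟨k, ?_⟩
    rw [h1, hk, div_eq_iff hl0.ne']
    push_cast; ring

lemma ffn_zero (y : ℝ) (hy : 0 < y) (l : ℕ) (hl : ⌊y⌋₊ < l) : Ffn (y / l) = 0 := by
  rw [ffn_eq y hy l (by omega), Nat.div_eq_of_lt hl, if_neg]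
  · simp
  rintro ⟨h1, h2⟩
  have := Nat.eq_zero_of_dvd_of_lt h2 hl
  rw [this] at h1
  simp at h1
  exact hy.ne' h1

lemma psum_eq (y : ℝ) (hy : 0 < y) (g : ℕ → ℂ) (M : ℕ) (hM : ⌊y⌋₊ ≤ M) :
    psum y (fun n => ∑ l ∈ n.divisors, g l) =
      ∑ l ∈ Finset.Icc 1 M, ((Ffn (y / l) : ℝ) : ℂ) * g l := by
  have h1 : ∑ l ∈ Finset.Icc 1 M, ((Ffn (y / l) : ℝ) : ℂ) * g l =
      ∑ l ∈ Finset.Icc 1 ⌊y⌋₊, ((Ffn (y / l) : ℝ) : ℂ) * g l := by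
    symm
    apply Finset.sum_subset (Finset.Icc_subset_Icc_right hM)
    intro l hl hl2
    simp only [Finset.mem_Icc] at hl hl2
    rw [ffn_zero y hy l (by omega)]
    simp
  rw [h1]
  have h2 : ∀ l ∈ Finset.Icc 1 ⌊y⌋₊, ((Ffn (y / l) : ℝ) : ℂ) * g l =
      ((⌊y⌋₊ / l : ℕ) : ℂ) * g l -
      (if y = (⌊y⌋₊ : ℝ) ∧ l ∣ ⌊y⌋₊ then g l / 2 else 0) := by
    intro l hl
    rw [ffn_eq y hy l (Finset.mem_Icc.1 hl).1]
    split_ifs <;> push_cast <;> ring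
  rw [Finset.sum_congr rfl h2, Finset.sum_sub_distrib]
  unfold psum
  congr 1
  · rw [Finset.sum_comm' (t' := Finset.Icc 1 ⌊y⌋₊)
      (s' := fun l => (Finset.Ioc 0 ⌊y⌋₊).filter (fun n => l ∣ n))]
    · apply Finset.sum_congr rfl
      intro l hl
      rw [Finset.sum_const, Nat.Ioc_filter_dvd_card_eq_div, nsmul_eq_mul]
    · intro n l
      simp only [Finset.mem_Icc, Nat.mem_divisors, Finset.mem_filter, Finset.mem_Ioc]
      constructor
      · rintro ⟨⟨a, b⟩, c, d⟩
        have := Nat.le_of_dvd (by omega) c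
        have := Nat.pos_of_dvd_of_pos c (by omega)
        exact ⟨⟨⟨by omega, b⟩, c⟩, by omega, by omega⟩
      · rintro ⟨⟨⟨a, b⟩, c⟩, d⟩
        exact ⟨⟨by omega, b⟩, c, by omega⟩
  · by_cases h : y = (⌊y⌋₊ : ℝ)
    · have h3 : 1 ≤ ⌊y⌋₊ := by
        by_contra h4
        have : ⌊y⌋₊ = 0 := by omega
        rw [this] at h
        simp at h
        exact hy.ne' h
      rw [if_pos ⟨h, h3⟩, Finset.sum_div]
      simp only [← h, true_and]
      rw [← Finset.sum_filter]
      apply Finset.sum_congr _ (fun _ _ => rfl)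
      ext l
      simp only [Finset.mem_Icc, Nat.mem_divisors, Finset.mem_filter]
      constructor
      · rintro ⟨c, d⟩
        have := Nat.le_of_dvd (by omega) c
        have := Nat.pos_of_dvd_of_pos c (by omega)
        exact ⟨⟨by omega, by omega⟩, c⟩
      · rintro ⟨_, c⟩
        exact ⟨c, by omega⟩
    · simp [h]

lemma tau_eq (q : ℕ) [NeZero q] (χ : DirichletCharacter ℂ q) :
    tauConj q χ = ∑ r : ZMod q, (starRingEnd ℂ) (χ r) * ZMod.stdAddChar r := by
  obtain ⟨m, rfl⟩ : ∃ m, q = m + 1 := ⟨q - 1, by have := NeZero.ne q; omega⟩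
  unfold tauConj
  apply Finset.sum_congr rfl
  intro r _
  rw [ZMod.stdAddChar_apply, ZMod.toCircle_apply]
  push_cast
  rfl

lemma sum_tau (q : ℕ) [Fact q.Prime] (b : ZMod q) (hb : b ≠ 0) :
    ∑ χ : DirichletCharacter ℂ q, χ b * tauConj q χ = (q.totient : ℂ) * ZMod.stdAddChar b := by
  simp_rw [tau_eq, Finset.mul_sum]
  rw [Finset.sum_comm]
  have h : ∀ r : ZMod q, ∑ χ : DirichletCharacter ℂ q,
      χ b * ((starRingEnd ℂ) (χ r) * ZMod.stdAddChar r) =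
      if r = b then (q.totient : ℂ) * ZMod.stdAddChar b else 0 := by
    intro r
    by_cases hr : r = 0
    · subst hr
      rw [if_neg hb.symm]
      apply Finset.sum_eq_zero
      intro χ _
      rw [MulChar.map_nonunit χ (not_isUnit_zero)]
      simp
    · have h1 := DirichletCharacter.sum_char_inv_mul_char_eq ℂ (isUnit_iff_ne_zero.2 hr) b
      calc _ = (∑ χ : DirichletCharacter ℂ q, χ r⁻¹ * χ b) * ZMod.stdAddChar r := by
            rw [Finset.sum_mul]
            apply Finset.sum_congr rfl
            intro χ _
            rw [← MulChar.inv_apply', ← MulChar.star_eq_inv, MulChar.star_apply]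
            simp only [RCLike.star_def]
            ring
        _ = _ := by
            rw [h1]
            split_ifs with h2
            · rw [h2]
            · simp
  rw [Finset.sum_congr rfl (fun r _ => h r)]
  simp

lemma sum_even (q : ℕ) [Fact q.Prime] (a : ℕ) (l : ℕ) (ha : (a : ZMod q) ≠ 0) :
    (∑ χ : DirichletCharacter ℂ q,
      if χ.Even then χ (a : ZMod q) * tauConj q χ * χ (l : ZMod q) else 0) =
    if q ∣ l then 0 else
      (q.totient : ℂ) * ((Real.cos (2 * π * (l : ℝ) * a / q) : ℝ) : ℂ) := by
  split_ifs with hl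
  · rw [(ZMod.natCast_eq_zero_iff l q).2 hl]
    apply Finset.sum_eq_zero
    intro χ _
    rw [MulChar.map_nonunit χ (not_isUnit_zero)]
    simp
  have hl' : (l : ZMod q) ≠ 0 := by rwa [Ne, ZMod.natCast_eq_zero_iff]
  have hb : (a : ZMod q) * l ≠ 0 := mul_ne_zero ha hl'
  have h1 : ∀ χ : DirichletCharacter ℂ q,
      (if χ.Even then χ (a : ZMod q) * tauConj q χ * χ (l : ZMod q) else 0) =
      (χ ((a : ZMod q) * l) * tauConj q χ + χ (-((a : ZMod q) * l)) * tauConj q χ) / 2 := by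
    intro χ
    rw [← neg_one_mul ((a : ZMod q) * l), map_mul χ (-1), map_mul]
    rcases χ.even_or_odd with h | h
    · rw [if_pos h, h]; ring
    · have : ¬ χ.Even := by
        intro h'
        have h2 : (χ (-1)) = 1 := h'
        have h3 : (χ (-1)) = -1 := h
        rw [h2] at h3
        norm_num at h3
      rw [if_neg this, h]; ring
  rw [Finset.sum_congr rfl (fun χ _ => h1 χ), ← Finset.sum_div, Finset.sum_add_distrib,
    sum_tau q _ hb, sum_tau q _ (neg_ne_zero.2 hb)]
  have e1 : (ZMod.stdAddChar ((a : ZMod q) * (l : ZMod q)) : ℂ) =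
      Complex.exp (2 * π * Complex.I * (((a * l : ℕ) : ℤ) : ℂ) / q) := by
    rw [← ZMod.stdAddChar_coe]; push_cast; rfl
  have e2 : (ZMod.stdAddChar (-((a : ZMod q) * (l : ZMod q))) : ℂ) =
      Complex.exp (2 * π * Complex.I * ((-((a * l : ℕ) : ℤ) : ℤ) : ℂ) / q) := by
    rw [← ZMod.stdAddChar_coe]; push_cast; rfl
  rw [e1, e2, Complex.ofReal_cos, Complex.cos]
  push_cast
  rw [show (2 * π * Complex.I * ((a : ℂ) * l) / q) = 2 * π * l * a / q * Complex.I by ring,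
    show (2 * π * Complex.I * (-((a : ℂ) * l)) / q) = -(2 * π * l * a / q) * Complex.I by ring]
  ring

theorem even_character_divisor_identity
    (q : ℕ) (hq : q.Prime) (a : ℕ) (ha0 : 0 < a) (haq : a < q)
    (s : ℂ) (x : ℝ) (hx : 0 < x) :
    (∑' n : ℕ, ((Ffn (x / ((n : ℝ) + 1)) : ℝ) : ℂ) *
        ((Real.cos (2 * π * ((n : ℝ) + 1) * a / q) : ℝ) : ℂ) * ((n : ℂ) + 1) ^ s)
    = (q : ℂ) ^ s * psum (x / q) (fun n => csigma s n)
      + (q : ℂ) ^ s *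
        ∑ d ∈ q.divisors.filter (fun d => 1 < d),
          ((d : ℂ) ^ s * (Nat.totient d : ℂ))⁻¹ *
            ∑' χ : DirichletCharacter ℂ d,
              if χ.Even then
                χ (a : ZMod d) * tauConj d χ *
                  psum (d * x / q) (fun n => sigmaChi χ s n)
              else 0 := by
  have : Fact q.Prime := ⟨hq⟩
  have hq0 : (0 : ℝ) < q := by exact_mod_cast hq.pos
  have hqc : (q : ℂ) ≠ 0 := by exact_mod_cast hq.ne_zero
  have hdiv : q.divisors.filter (fun d => 1 < d) = {q} := by
    rw [hq.divisors]
    ext d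
    have := hq.one_lt
    simp only [Finset.mem_filter, Finset.mem_insert, Finset.mem_singleton]
    constructor
    · rintro ⟨h | h, h2⟩ <;> omega
    · rintro rfl; exact ⟨Or.inr rfl, this⟩
  have haz : (a : ZMod q) ≠ 0 := by
    rw [Ne, ZMod.natCast_eq_zero_iff]
    intro h
    have := Nat.le_of_dvd ha0 h
    omega
  rw [hdiv, Finset.sum_singleton,
    tsum_fintype (β := DirichletCharacter ℂ q), mul_div_cancel_left₀ x hq0.ne']
  set M := ⌊x⌋₊ with hM
  have hMq : M ≤ q * M := Nat.le_mul_of_pos_left _ hq.pos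
  -- left side
  have hL : (∑' n : ℕ, ((Ffn (x / ((n : ℝ) + 1)) : ℝ) : ℂ) *
        ((Real.cos (2 * π * ((n : ℝ) + 1) * a / q) : ℝ) : ℂ) * ((n : ℂ) + 1) ^ s) =
      ∑ l ∈ Finset.Icc 1 (q * M), ((Ffn (x / l) : ℝ) : ℂ) *
        (((Real.cos (2 * π * (l : ℝ) * a / q) : ℝ) : ℂ) * (l : ℂ) ^ s) := by
    rw [tsum_eq_sum (s := Finset.range (q * M))]
    · apply Finset.sum_nbij' (fun n => n + 1) (fun l => l - 1)
      · intro n hn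
        simp only [Finset.mem_range, Finset.mem_Icc] at hn ⊢
        omega
      · intro n hn
        simp only [Finset.mem_range, Finset.mem_Icc] at hn ⊢
        omega
      · intro n _
        simp
      · intro n hn
        simp only [Finset.mem_Icc] at hn
        omega
      · intro n _
        push_cast
        ring
    · intro n hn
      simp only [Finset.mem_range] at hn
      have := ffn_zero x hx (n + 1) (by omega)
      push_cast at this
      rw [this]
      simp
  have hA : psum (x / q) (fun n => csigma s n) =
      ∑ k ∈ Finset.Icc 1 M, ((Ffn (x / q / k) : ℝ) : ℂ) * (k : ℂ) ^ s := by
    apply psum_eq (x / q) (by positivity) (fun l => (l : ℂ) ^ s) M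
    apply Nat.floor_le_floor
    exact div_le_self hx.le (by exact_mod_cast hq.one_lt.le)
  have hA2 : (q : ℂ) ^ s * psum (x / q) (fun n => csigma s n) =
      ∑ l ∈ Finset.Icc 1 (q * M), if q ∣ l then
        ((Ffn (x / l) : ℝ) : ℂ) * (l : ℂ) ^ s else 0 := by
    rw [hA, Finset.mul_sum, ← Finset.sum_filter]
    apply Finset.sum_nbij' (fun k => q * k) (fun l => l / q)
    · intro k hk
      simp only [Finset.mem_Icc, Finset.mem_filter] at hk ⊢
      exact ⟨⟨Nat.mul_pos hq.pos hk.1, Nat.mul_le_mul_left _ hk.2⟩, Dvd.intro k rfl⟩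
    · intro l hl
      simp only [Finset.mem_Icc, Finset.mem_filter] at hl ⊢
      obtain ⟨⟨h1, h2⟩, k, rfl⟩ := hl
      rw [Nat.mul_div_cancel_left _ hq.pos]
      exact ⟨Nat.pos_of_mul_pos_left h1, Nat.le_of_mul_le_mul_left h2 hq.pos⟩
    · intro k _
      exact Nat.mul_div_cancel_left _ hq.pos
    · intro l hl
      exact Nat.mul_div_cancel' (Finset.mem_filter.1 hl).2
    · intro k _
      push_cast
      rw [Complex.natCast_mul_natCast_cpow, div_div]
      ring
  have hB : (∑ χ : DirichletCharacter ℂ q, if χ.Even then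
      χ (a : ZMod q) * tauConj q χ * psum x (fun n => sigmaChi χ s n) else 0) =
      ∑ l ∈ Finset.Icc 1 (q * M), ((Ffn (x / l) : ℝ) : ℂ) * (l : ℂ) ^ s *
        (if q ∣ l then 0 else
      (q.totient : ℂ) * ((Real.cos (2 * π * (l : ℝ) * a / q) : ℝ) : ℂ)) := by
    simp_rw [← sum_even q a _ haz, Finset.mul_sum]
    rw [Finset.sum_comm]
    apply Finset.sum_congr rfl
    intro χ _
    split_ifs with h
    · have := psum_eq x hx (fun l => χ (l : ZMod q) * (l : ℂ) ^ s) (q * M) hMq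
      unfold sigmaChi
      rw [this, Finset.mul_sum]
      apply Finset.sum_congr rfl
      intro l _
      ring
    · simp
  have hphi : (q.totient : ℂ) ≠ 0 := by
    exact_mod_cast (Nat.totient_pos.2 hq.pos).ne'
  have hqs : (q : ℂ) ^ s ≠ 0 := by
    rw [Ne, Complex.cpow_eq_zero_iff]; tauto
  rw [hL, hA2, hB, ← mul_assoc, Finset.mul_sum, ← Finset.sum_add_distrib]
  apply Finset.sum_congr rfl
  intro l _
  split_ifs with h
  · obtain ⟨k, rfl⟩ := h
    have : Real.cos (2 * π * ((q * k : ℕ) : ℝ) * a / q) = 1 := by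
      rw [← Real.cos_nat_mul_two_pi (k * a)]
      congr 1
      push_cast
      field_simp
    rw [this]
    simp
  · field_simp
    ring
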